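/- Let μ be a finite Borel measure on ℝⁿ with compact support and let g ∈ ℝ[x₁,…,xₙ]. If ∫ g(x) p(x)² dμ(x) ≥ 0 for every polynomial p ∈ ℝ[x₁,…,xₙ], then g(x) ≥ 0 for every x in the support of μ. -/

import Mathlib

open MeasureTheory MvPolynomial

/-- The support of a Borel measure `μ` on `ℝⁿ`: the smallest closed set whose
complement has `μ`-measure zero. -/
def measureSupport {n : ℕ} (μ : Measure (Fin n → ℝ)) : Set (Fin n → ℝ) :=
  ⋂₀ {C : Set (Fin n → ℝ) | IsClosed C ∧ μ Cᶜ = 0}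

/-!
In the compact-open topology a point-separating algebra of continuous functions is dense
(Stone–Weierstrass), while `h ↦ ∫ g h² dμ` is continuous because `μ` lives on a compact set. Hence
`∫ g h² dμ ≥ 0` for every continuous `h`. Taking for `h` the negative part `g⁻` gives
`-∫ (g⁻)³ dμ ≥ 0`, so `g ≥ 0` almost everywhere, and the closed set `{g ≥ 0}` contains the support.
-/

open Filter Topology

theorem dense_subalgebra_of_separatesPoints {X : Type*} [TopologicalSpace X]
    {A : Subalgebra ℝ C(X, ℝ)} (hA : A.SeparatesPoints) : Dense (A : Set C(X, ℝ)) := by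
  intro f
  rw [mem_closure_iff_nhds_basis (nhds_basis_uniformity'
    Metric.uniformity_basis_dist.compactConvergenceUniformity)]
  rintro ⟨K, ε⟩ ⟨hK, hε⟩
  obtain ⟨p, hpA, hpf⟩ :=
    ContinuousMap.exists_mem_subalgebra_near_continuous_of_isCompact_of_separatesPoints hA f hK hε
  refine ⟨p, hpA, fun x hx ↦ ?_⟩
  change dist (f x) (p x) < ε
  rw [dist_comm, dist_eq_norm]
  exact hpf x hx

theorem tendstoUniformlyOn_nhds_continuousMap {X Y : Type*} [TopologicalSpace X] [UniformSpace Y]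
    (f : C(X, Y)) {K : Set X} (hK : IsCompact K) :
    TendstoUniformlyOn (fun (h : C(X, Y)) x ↦ h x) f (𝓝 f) K :=
  ContinuousMap.tendsto_iff_forall_isCompact_tendstoUniformlyOn.mp tendsto_id K hK

theorem continuous_prodMk_continuousMap {X Y Z : Type*} [TopologicalSpace X] [UniformSpace Y]
    [UniformSpace Z] : Continuous fun p : C(X, Y) × C(X, Z) ↦ p.1.prodMk p.2 := by
  rw [continuous_iff_continuousAt]
  rintro ⟨f, g⟩
  rw [ContinuousAt, ContinuousMap.tendsto_iff_forall_isCompact_tendstoUniformlyOn, nhds_prod_eq]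
  exact fun K hK ↦
    (tendstoUniformlyOn_nhds_continuousMap f hK).prodMk
      (tendstoUniformlyOn_nhds_continuousMap g hK)

/-- Unlike Mathlib's instance this does not ask for `X` to be locally compact: the uniform structure
on `Y` makes the compact-open topology that of uniform convergence on compact sets. -/
instance continuousMul_continuousMap {X Y : Type*} [TopologicalSpace X] [UniformSpace Y] [Mul Y]
    [ContinuousMul Y] : ContinuousMul C(X, Y) where
  continuous_mul :=
    (ContinuousMap.continuous_postcomp ⟨fun y : Y × Y ↦ y.1 * y.2, continuous_mul⟩).comp
      continuous_prodMk_continuousMap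

section Integral

variable {X E : Type*} [MeasurableSpace X] {μ : Measure X} [IsFiniteMeasure μ]
  [NormedAddCommGroup E] {K : Set X}

theorem tendsto_integral_of_tendstoUniformlyOn [NormedSpace ℝ E] {ι : Type*} {l : Filter ι}
    {F : ι → X → E} {f : X → E} (hF : ∀ i, Integrable (F i) μ) (hf : Integrable f μ)
    (hμK : ∀ᵐ x ∂μ, x ∈ K) (hFf : TendstoUniformlyOn F f l K) :
    Tendsto (fun i ↦ ∫ x, F i x ∂μ) l (𝓝 (∫ x, f x ∂μ)) := by
  rw [Metric.tendsto_nhds]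
  intro ε hε
  obtain ⟨δ, hδ, hδε⟩ : ∃ δ > 0, μ.real Set.univ * δ < ε := exists_pos_mul_lt hε _
  filter_upwards [Metric.tendstoUniformlyOn_iff.mp hFf δ hδ] with i hi
  have hclose : ∀ᵐ x ∂μ, ‖F i x - f x‖ ≤ δ := by
    filter_upwards [hμK] with x hx
    rw [← dist_eq_norm, dist_comm]
    exact (hi x hx).le
  calc dist (∫ x, F i x ∂μ) (∫ x, f x ∂μ)
      = ‖∫ x, (F i x - f x) ∂μ‖ := by rw [dist_eq_norm, integral_sub (hF i) hf]
    _ ≤ δ * μ.real Set.univ := norm_integral_le_of_norm_le_const hclose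
    _ < ε := by rwa [mul_comm]

variable [TopologicalSpace X] [OpensMeasurableSpace X] [SecondCountableTopologyEither X E]

theorem integrable_of_continuous_of_ae_mem_isCompact {f : X → E} (hf : Continuous f)
    (hK : IsCompact K) (hμK : ∀ᵐ x ∂μ, x ∈ K) : Integrable f μ := by
  obtain ⟨M, hM⟩ := hK.exists_bound_of_continuousOn hf.continuousOn
  exact .of_bound hf.aestronglyMeasurable M (hμK.mono hM)

theorem continuous_integral_continuousMap [NormedSpace ℝ E]
    (hK : IsCompact K) (hμK : ∀ᵐ x ∂μ, x ∈ K) :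
    Continuous fun h : C(X, E) ↦ ∫ x, h x ∂μ := by
  have hint (h : C(X, E)) : Integrable h μ :=
    integrable_of_continuous_of_ae_mem_isCompact h.continuous hK hμK
  exact continuous_iff_continuousAt.mpr fun h ↦
    tendsto_integral_of_tendstoUniformlyOn hint (hint h) hμK
      (tendstoUniformlyOn_nhds_continuousMap h hK)

end Integral

theorem mul_negPart_sq {R : Type*} [CommRing R] [LinearOrder R] [IsOrderedRing R] (a : R) :
    a * a⁻ ^ 2 = -a⁻ ^ 3 := by
  rcases le_total 0 a with ha | ha
  · simp [negPart_eq_zero.mpr ha]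
  · rw [negPart_eq_neg.mpr ha]
    ring

section NonnegSquares

variable {X : Type*} [TopologicalSpace X] [MeasurableSpace X] [OpensMeasurableSpace X]
  {μ : Measure X} [IsFiniteMeasure μ] {K : Set X}

theorem integral_mul_sq_nonneg_of_dense (hK : IsCompact K) (hμK : ∀ᵐ x ∂μ, x ∈ K)
    {S : Set C(X, ℝ)} (hS : Dense S) (f : C(X, ℝ))
    (hpos : ∀ p ∈ S, 0 ≤ ∫ x, f x * p x ^ 2 ∂μ) (h : C(X, ℝ)) :
    0 ≤ ∫ x, f x * h x ^ 2 ∂μ := by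
  have hcont : Continuous fun h : C(X, ℝ) ↦ ∫ x, (f * h ^ 2) x ∂μ :=
    (continuous_integral_continuousMap hK hμK).comp (by fun_prop)
  exact isClosed_property hS.denseRange_val (isClosed_le continuous_const hcont)
    (fun p ↦ hpos p p.2) h

theorem ae_nonneg_of_integral_mul_sq_nonneg (hK : IsCompact K) (hμK : ∀ᵐ x ∂μ, x ∈ K)
    (f : C(X, ℝ)) (hpos : ∀ h : C(X, ℝ), 0 ≤ ∫ x, f x * h x ^ 2 ∂μ) :
    ∀ᵐ x ∂μ, 0 ≤ f x := by
  have hint : Integrable (fun x ↦ (f x)⁻ ^ 3) μ :=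
    integrable_of_continuous_of_ae_mem_isCompact (f⁻ ^ 3).continuous hK hμK
  have hnonneg : 0 ≤ fun x ↦ (f x)⁻ ^ 3 := fun x ↦ pow_nonneg (negPart_nonneg (f x)) 3
  have hnonpos : ∫ x, (f x)⁻ ^ 3 ∂μ ≤ 0 := by
    rw [← neg_nonneg, ← integral_neg]
    simp only [← mul_negPart_sq]
    exact hpos f⁻
  have hzero := hnonpos.antisymm (integral_nonneg hnonneg)
  filter_upwards [(integral_eq_zero_iff_of_nonneg hnonneg hint).mp hzero] with x hx
  exact negPart_eq_zero.mp (eq_zero_of_pow_eq_zero hx)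

theorem stmt_13_general (hsupp : ∃ K : Set X, IsCompact K ∧ μ Kᶜ = 0)
    {A : Subalgebra ℝ C(X, ℝ)} (hA : A.SeparatesPoints) (f : C(X, ℝ))
    (hpos : ∀ p ∈ A, 0 ≤ ∫ x, f x * p x ^ 2 ∂μ) :
    ∀ x ∈ μ.support, 0 ≤ f x := by
  obtain ⟨K, hK, hμK⟩ := hsupp
  have hpos_continuous := integral_mul_sq_nonneg_of_dense hK hμK
    (dense_subalgebra_of_separatesPoints hA) f hpos
  have hae := ae_nonneg_of_integral_mul_sq_nonneg hK hμK f hpos_continuous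
  exact Measure.support_subset_of_isClosed (isClosed_le continuous_const f.continuous) hae

end NonnegSquares

section PolynomialFunctions

variable {σ R : Type*} [CommSemiring R] [TopologicalSpace R] [IsTopologicalSemiring R]

/-- The algebra homomorphism sending a polynomial to the continuous function it defines on the
space `σ → R`; its range is the algebra of polynomial functions. -/
noncomputable def mvPolynomialToContinuousMap : MvPolynomial σ R →ₐ[R] C(σ → R, R) :=
  aeval fun i ↦ ⟨fun x ↦ x i, continuous_apply i⟩

@[simp]
theorem mvPolynomialToContinuousMap_apply (p : MvPolynomial σ R) (x : σ → R) :
    mvPolynomialToContinuousMap p x = eval x p := by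
  induction p using MvPolynomial.induction_on with
  | C a => simp [mvPolynomialToContinuousMap]
  | add p q hp hq => simp [hp, hq]
  | mul_X p i hp =>
    rw [map_mul, ContinuousMap.mul_apply, hp]
    simp [mvPolynomialToContinuousMap]

theorem separatesPoints_range_mvPolynomialToContinuousMap :
    (mvPolynomialToContinuousMap (σ := σ) (R := R)).range.SeparatesPoints := by
  intro x y hxy
  obtain ⟨i, hi⟩ := Function.ne_iff.mp hxy
  exact ⟨_, ⟨_, ⟨X i, rfl⟩, rfl⟩, by simpa using hi⟩

end PolynomialFunctions

theorem stmt_13 {n : ℕ} (μ : Measure (Fin n → ℝ)) [IsFiniteMeasure μ]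
    (hsupp : ∃ C : Set (Fin n → ℝ), IsCompact C ∧ μ Cᶜ = 0)
    (g : MvPolynomial (Fin n) ℝ)
    (hpos : ∀ p : MvPolynomial (Fin n) ℝ, 0 ≤ ∫ x, eval x g * (eval x p) ^ 2 ∂μ) :
    ∀ x ∈ measureSupport μ, 0 ≤ eval x g := by
  rw [measureSupport, ← Measure.support_eq_sInter]
  simpa using stmt_13_general hsupp separatesPoints_range_mvPolynomialToContinuousMap
    (mvPolynomialToContinuousMap g) (by simpa using hpos)
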